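/- Every polycyclic group admits a golden system. -/

import Mathlib

/-!
Let `1 = G₀ ≤ G₁ ≤ … ≤ G_k = G` be a series with cyclic factors and let `t_j ∈ G_j` generate `G_j`
over `G_{j-1}`.  Every element has a unique normal form `x = t_k ^ a_k * ⋯ * t_1 ^ a_1`, where `a_j`
ranges over `ℤ` if the `j`-th factor is infinite and over `[0, r_j)` if it has order `r_j`.  Colour `x`
by the signs of the exponents at infinite factors together with the exact exponents at finite
factors; the colour of `1` is taken only at `1`.

Build `x` from `1` by multiplying on the left, first by `t_1` or its inverse `|a_1|` times, then by
`t_2` or its inverse `|a_2|` times, and so on.  While the `j`-th exponent is being built the element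
lies in `G_j`, so multiplying by `t_j ^ (±1)` changes only that exponent, moves it away from `0`, and
(within a finite factor) never wraps around.  Hence the new colour is determined by the old one.
A rule of this kind is visible in the configuration set, so it also holds in every configuration
equivalent pair `(𝔥, ℱ)`, and the normal form word of `x` carries `F (ς 1)` into `F (ς x)`.

`Reach` axiomatizes such deterministic moves, `Reach.exists_word` transfers them to `H`, and
`Good.extend` adds one cyclic factor.  Only the left half of the configurations is used.
-/


open scoped Pointwise

universe u v

/-- `g` is an (ordered, finite) generating tuple of the group `G`. -/
def IsGenerating {G : Type*} [Group G] {n : ℕ} (g : Fin n → G) : Prop :=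
  Subgroup.closure (Set.range g) = ⊤

/-- `E` is an (ordered, finite) partition of the underlying set of `G`:
every element lies in exactly one cell. -/
def IsPartition {G : Type*} {m : ℕ} (E : Fin m → Set G) : Prop :=
  ∀ x : G, ∃! i : Fin m, x ∈ E i

/-- The type in which two-sided configurations corresponding to a generating tuple of
length `n` and a partition of length `m` live: a tuple `(c₀, (c₁,…,cₙ), (c_{n+1},…,c_{2n}))`. -/
abbrev TwoSidedConfig (n m : ℕ) := Fin m × (Fin n → Fin m) × (Fin n → Fin m)

/-- The two-sided configuration set `Con_t(𝔤, ℰ)`. -/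
def TwoSidedConfigSet {G : Type*} [Group G] {n m : ℕ} (g : Fin n → G) (E : Fin m → Set G) :
    Set (TwoSidedConfig n m) :=
  {c | ∃ x ∈ E c.1, ∀ i : Fin n, g i * x ∈ E (c.2.1 i) ∧ x * g i ∈ E (c.2.2 i)}

/-- `Con_t(G)`: the collection of all two-sided configuration sets of `G`,
over all configuration pairs `(𝔤, ℰ)`. -/
def TwoSidedConfigSets (G : Type*) [Group G] : Set (Σ n m : ℕ, Set (TwoSidedConfig n m)) :=
  {S | ∃ g : Fin S.1 → G, ∃ E : Fin S.2.1 → Set G,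
    IsGenerating g ∧ IsPartition E ∧ S.2.2 = TwoSidedConfigSet g E}

/-- Two-sided configuration equivalence `G ≈ₜ H`. -/
def ConfigEqT (G : Type*) (H : Type*) [Group G] [Group H] : Prop :=
  TwoSidedConfigSets G = TwoSidedConfigSets H

/-- The (one-sided) configuration set `Con(𝔤, ℰ)`. -/
def ConfigSet {G : Type*} [Group G] {n m : ℕ} (g : Fin n → G) (E : Fin m → Set G) :
    Set (Fin m × (Fin n → Fin m)) :=
  {c | ∃ x ∈ E c.1, ∀ k : Fin n, g k * x ∈ E (c.2 k)}

/-- `Con(G)`: the collection of all configuration sets of `G`. -/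
def ConfigSets (G : Type*) [Group G] : Set (Σ n m : ℕ, Set (Fin m × (Fin n → Fin m))) :=
  {S | ∃ g : Fin S.1 → G, ∃ E : Fin S.2.1 → Set G,
    IsGenerating g ∧ IsPartition E ∧ S.2.2 = ConfigSet g E}

/-- Configuration equivalence `G ≈ H`. -/
def ConfigEq (G : Type*) (H : Type*) [Group G] [Group H] : Prop :=
  ConfigSets G = ConfigSets H

/-- The word `W(J, ρ; 𝔤) = ∏_{i=1}^{p} g_{J(i)}^{ρ(i)}` associated to a representative
pair `(J, ρ)` (here `ρ i = true` encodes exponent `1`, and `ρ i = false` exponent `-1`). -/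
def word {G : Type*} [Group G] {n p : ℕ} (g : Fin n → G) (J : Fin p → Fin n)
    (ρ : Fin p → Bool) : G :=
  ((List.finRange p).map (fun i => if ρ i then g (J i) else (g (J i))⁻¹)).prod

/-- The configuration pair `(𝔤, q⁻¹(ℰ))` is golden w.r.t. the normal subgroup `N`,
where `ℰ` is a partition of `G ⧸ N` containing the singleton `{1}`. -/
def IsGoldenConfigPair {G : Type u} [Group G] (N : Subgroup G) [N.Normal] {n m : ℕ}
    (g : Fin n → G) (E : Fin m → Set (G ⧸ N)) : Prop :=
  IsGenerating g ∧ IsPartition E ∧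
  ∃ i₀ : Fin m, E i₀ = ({1} : Set (G ⧸ N)) ∧
  ∃ (p : G → ℕ) (J : ∀ x : G, Fin (p x) → Fin n) (ρ : ∀ x : G, Fin (p x) → Bool),
    (∀ x : G, x ∉ N →
      QuotientGroup.mk' N x = word (fun i => QuotientGroup.mk' N (g i)) (J x) (ρ x)) ∧
    (∀ (H : Type v) [Group H] (h : Fin n → H) (F : Fin m → Set H),
      IsGenerating h → IsPartition F →
      TwoSidedConfigSet g (fun i => QuotientGroup.mk' N ⁻¹' E i) = TwoSidedConfigSet h F →
      ∀ x : G, x ∉ N → word h (J x) (ρ x) • F i₀ ∩ F i₀ = ∅)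

/-- `G` has a golden configuration pair w.r.t. the normal subgroup `N`. -/
def HasGoldenConfigPairWrt (G : Type u) [Group G] (N : Subgroup G) [N.Normal] : Prop :=
  ∃ (n m : ℕ) (g : Fin n → G) (E : Fin m → Set (G ⧸ N)), IsGoldenConfigPair.{u, v} N g E

/-- `G` has a golden configuration pair (i.e. one w.r.t. the trivial subgroup). -/
def HasGoldenConfigPair (G : Type u) [Group G] : Prop :=
  HasGoldenConfigPairWrt.{u, v} G ⊥

/-- `(𝔤, ς, {(J_g, ρ_g)})` is a golden system w.r.t. the normal subgroup `N`.  The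
finite-range function `ς` on `G ⧸ N` is encoded as a surjection onto `Fin m`; the
`ς`-partition of `G` is then `v ↦ (ς ∘ q)⁻¹(v)`, `v : Fin m`. -/
def IsGoldenSystem {G : Type u} [Group G] (N : Subgroup G) [N.Normal] {n m : ℕ}
    (g : Fin n → G) (ς : G ⧸ N → Fin m)
    {p : G → ℕ} (J : ∀ x : G, Fin (p x) → Fin n) (ρ : ∀ x : G, Fin (p x) → Bool) : Prop :=
  IsGenerating g ∧ Function.Surjective ς ∧
  (∀ x : G, x ∉ N →
    QuotientGroup.mk' N x = word (fun i => QuotientGroup.mk' N (g i)) (J x) (ρ x)) ∧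
  ((fun x : G => ς (QuotientGroup.mk' N x)) ⁻¹' {ς (1 : G ⧸ N)} = (N : Set G)) ∧
  (∀ (H : Type v) [Group H] (h : Fin n → H) (F : Fin m → Set H),
    IsGenerating h → IsPartition F →
    TwoSidedConfigSet g (fun v => (fun x : G => ς (QuotientGroup.mk' N x)) ⁻¹' {v})
      = TwoSidedConfigSet h F →
    ∀ x : G, x ∉ N →
      word h (J x) (ρ x) • F (ς (1 : G ⧸ N)) ⊆ F (ς (QuotientGroup.mk' N x)))

/-- `G` admits a golden system w.r.t. the normal subgroup `N`. -/
def HasGoldenSystemWrt (G : Type u) [Group G] (N : Subgroup G) [N.Normal] : Prop :=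
  ∃ (n m : ℕ) (g : Fin n → G) (ς : G ⧸ N → Fin m) (p : G → ℕ)
    (J : ∀ x : G, Fin (p x) → Fin n) (ρ : ∀ x : G, Fin (p x) → Bool),
    IsGoldenSystem.{u, v} N g ς J ρ

/-- `G` admits a golden system (i.e. one w.r.t. the trivial subgroup). -/
def HasGoldenSystem (G : Type u) [Group G] : Prop :=
  HasGoldenSystemWrt.{u, v} G ⊥

/-- A group is Hopfian if every surjective endomorphism is an automorphism. -/
def IsHopfianGroup (G : Type*) [Group G] : Prop :=
  ∀ f : G →* G, Function.Surjective f → Function.Bijective f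

/-- A group is finitely presented if it is presented by finitely many generators
and finitely many relators. -/
def IsFinitelyPresentedGroup (G : Type*) [Group G] : Prop :=
  ∃ (n : ℕ) (rels : Set (FreeGroup (Fin n))),
    rels.Finite ∧ Nonempty (PresentedGroup rels ≃* G)

/-- A group is polycyclic if it has a subnormal series with cyclic factors. -/
def IsPolycyclic (G : Type*) [Group G] : Prop :=
  ∃ (k : ℕ) (c : Fin (k + 1) → Subgroup G),
    c 0 = ⊥ ∧ c (Fin.last k) = ⊤ ∧
    ∀ i : Fin k, c i.castSucc ≤ c i.succ ∧
      ∃ hn : ((c i.castSucc).subgroupOf (c i.succ)).Normal,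
        letI := hn
        IsCyclic ((c i.succ) ⧸ (c i.castSucc).subgroupOf (c i.succ))

/-- An FC-group: every conjugacy class is finite. -/
def IsFCGroup (G : Type*) [Group G] : Prop :=
  ∀ g : G, {h : G | IsConj g h}.Finite

/-- A normal subset: `hM = Mh` for all `h`. -/
def IsNormalSubset {H : Type*} [Group H] (M : Set H) : Prop :=
  ∀ h : H, (fun x => h * x) '' M = (fun x => x * h) '' M

/-- `E'` is a refinement of the partition `E`. -/
def IsRefinement {G : Type*} {r s : ℕ} (E' : Fin s → Set G) (E : Fin r → Set G) : Prop :=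
  ∀ l : Fin s, ∃ k : Fin r, E' l ⊆ E k

/-- The pairs `(ℰ', ℰ)` and `(ℱ', ℱ)` are similar. -/
def SimilarPairs {G H : Type*} {r s : ℕ} (E : Fin r → Set G) (E' : Fin s → Set G)
    (F : Fin r → Set H) (F' : Fin s → Set H) : Prop :=
  ∀ k : Fin r, {l : Fin s | (E k ∩ E' l).Nonempty} = {l : Fin s | (F k ∩ F' l).Nonempty}

/-- `Reach g ς x`: `x` is obtained from `1` by left multiplications by the `g i` and their inverses,
each of which is deterministic for the colouring `ς`: the colour before the move determines the colour
after it. -/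
inductive Reach {G : Type*} [Group G] {ι α : Type*} (g : ι → G) (ς : G → α) : G → Prop
  | one : Reach g ς 1
  | step (i : ι) (x : G) : Reach g ς x → (∀ z, ς z = ς x → ς (g i * z) = ς (g i * x)) →
      Reach g ς (g i * x)
  | back (i : ι) (x : G) : Reach g ς (g i * x) → (∀ z, ς (g i * z) = ς (g i * x) → ς z = ς x) →
      Reach g ς x

/-- `G` has a finite generating family and a finite colouring, separating `1` from the other elements,
for which every element is reachable from `1` by deterministic moves. -/
def Good (G : Type*) [Group G] : Prop :=
  ∃ (ι α : Type) (_ : Finite ι) (_ : Finite α) (g : ι → G) (ς : G → α),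
    Subgroup.closure (Set.range g) = ⊤ ∧ (∀ x, ς x = ς 1 → x = 1) ∧ ∀ x, Reach g ς x

/-! ### From deterministic moves to golden systems -/

/-- The value of a list of signed letters, with the same sign convention as `word`. -/
def listWord {G : Type*} [Group G] {n : ℕ} (g : Fin n → G) (l : List (Fin n × Bool)) : G :=
  (l.map (fun a => if a.2 then g a.1 else (g a.1)⁻¹)).prod

theorem word_eq_listWord {G : Type*} [Group G] {n : ℕ} (g : Fin n → G) (l : List (Fin n × Bool)) :
    word g (fun i : Fin l.length => (l.get i).1) (fun i => (l.get i).2) = listWord g l := by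
  unfold word listWord
  conv_rhs => rw [← List.map_get_finRange l]
  rw [List.map_map]
  rfl

/-- A chain of deterministic moves leading to `x` spells a word which acts on the colour classes of
every configuration equivalent pair as it does in `G`. -/
theorem Reach.exists_word {G : Type u} [Group G] {ι α : Type*} {g : ι → G} {ς : G → α}
    {n m : ℕ} (e : Fin n ≃ ι) (σ : G → Fin m) (hσ : ∀ x y, σ x = σ y ↔ ς x = ς y) {x : G}
    (hx : Reach g ς x) :
    ∃ l : List (Fin n × Bool), listWord (g ∘ e) l = x ∧
      ∀ (H : Type v) [Group H] (h : Fin n → H) (F : Fin m → Set H), IsPartition F →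
        TwoSidedConfigSet (g ∘ e) (fun v => σ ⁻¹' {v}) = TwoSidedConfigSet h F →
        ∀ y ∈ F (σ 1), listWord h l * y ∈ F (σ x) := by
  -- Every edge `y → h i * y` in `H` has the same pair of colours as some edge in `G`.
  have key : ∀ (H : Type v) [Group H] (h : Fin n → H) (F : Fin m → Set H), IsPartition F →
      TwoSidedConfigSet (g ∘ e) (fun v => σ ⁻¹' {v}) = TwoSidedConfigSet h F →
      ∀ (i : Fin n) (y : H), ∃ z : G, y ∈ F (σ z) ∧ h i * y ∈ F (σ (g (e i) * z)) := by
    intro H _ h F hF hC i y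
    choose L hL _ using hF
    have : ((L y, fun j => L (h j * y), fun j => L (y * h j)) : TwoSidedConfig n m) ∈
        TwoSidedConfigSet h F := ⟨y, hL y, fun j => ⟨hL _, hL _⟩⟩
    rw [← hC] at this
    obtain ⟨z, hz, hz'⟩ := this
    have h1 : σ z = L y := hz
    have h2 : σ (g (e i) * z) = L (h i * y) := (hz' i).1
    exact ⟨z, h1 ▸ hL y, h2 ▸ hL _⟩
  induction hx with
  | one => exact ⟨[], rfl, fun H _ h F _ _ y hy => by simpa [listWord] using hy⟩
  | step i x _ hd ih =>
    obtain ⟨l, hl, hH⟩ := ih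
    refine ⟨(e.symm i, true) :: l, ?_, ?_⟩
    · simpa [listWord] using hl
    · intro H _ h F hF hC y hy
      have h1 := hH H h F hF hC y hy
      obtain ⟨z, hz1, hz2⟩ := key H h F hF hC (e.symm i) (listWord h l * y)
      rw [Equiv.apply_symm_apply] at hz2
      have h3 := (hF _).unique hz1 h1
      have h4 := (hσ _ _).2 (hd z ((hσ _ _).1 h3))
      rw [h4] at hz2
      simpa [listWord, mul_assoc] using hz2
  | back i x _ hd ih =>
    obtain ⟨l, hl, hH⟩ := ih
    refine ⟨(e.symm i, false) :: l, ?_, ?_⟩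
    · have : listWord (g ∘ e) ((e.symm i, false) :: l) = (g i)⁻¹ * listWord (g ∘ e) l := by
        simp [listWord]
      rw [this, hl, inv_mul_cancel_left]
    · intro H _ h F hF hC y hy
      have h1 := hH H h F hF hC y hy
      obtain ⟨z, hz1, hz2⟩ := key H h F hF hC (e.symm i) ((h (e.symm i))⁻¹ * (listWord h l * y))
      rw [Equiv.apply_symm_apply, mul_inv_cancel_left] at hz2
      have h3 := (hF _).unique hz2 h1
      have h4 := (hσ _ _).2 (hd z ((hσ _ _).1 h3))
      rw [h4] at hz1
      simpa [listWord, mul_assoc] using hz1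

theorem Good.hasGoldenSystem {G : Type u} [Group G] (hG : Good G) : HasGoldenSystem.{u, v} G := by
  obtain ⟨ι, α, _, _, g, ς, hgen, hone, hreach⟩ := hG
  obtain ⟨n, ⟨e'⟩⟩ := Finite.exists_equiv_fin ι
  obtain ⟨m, ⟨ε⟩⟩ := Finite.exists_equiv_fin (Set.range ς)
  let σ : G → Fin m := fun x => ε ⟨ς x, x, rfl⟩
  have hσ : ∀ x y, σ x = σ y ↔ ς x = ς y := by
    intro x y
    exact ε.injective.eq_iff.trans Subtype.mk_eq_mk
  have hσs : Function.Surjective σ := by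
    intro v
    obtain ⟨x, hx⟩ := (ε.symm v).2
    refine ⟨x, ?_⟩
    simp only [σ, hx, Subtype.coe_eta, Equiv.apply_symm_apply]
  choose l hl hH using fun x => (hreach x).exists_word.{u, v} e'.symm σ hσ
  refine ⟨n, m, g ∘ e'.symm, σ ∘ QuotientGroup.quotientBot, fun x => (l x).length,
    fun x i => ((l x).get i).1, fun x i => ((l x).get i).2, ?_, ?_, ?_, ?_, ?_⟩
  · rw [IsGenerating, e'.symm.surjective.range_comp, hgen]
  · exact hσs.comp QuotientGroup.quotientBot.surjective
  · intro x _
    have h1 := word_eq_listWord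
      (fun i => QuotientGroup.mk' (⊥ : Subgroup G) ((g ∘ e'.symm) i)) (l x)
    rw [h1]
    conv_lhs => rw [← hl x]
    simp only [listWord, map_list_prod, List.map_map]
    congr 1
    apply List.map_congr_left
    intro a _
    simp only [Function.comp_apply]
    split_ifs <;> simp
  · ext x
    change σ x = σ 1 ↔ x ∈ (⊥ : Subgroup G)
    rw [hσ, Subgroup.mem_bot]
    exact ⟨hone x, fun h => h ▸ rfl⟩
  · intro H _ h F _ hF hC x _
    rintro _ ⟨y, hy, rfl⟩
    change word h _ _ * y ∈ F (σ x)
    rw [word_eq_listWord]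
    exact hH x H h F hF hC y hy

/-! ### Adding a cyclic factor -/

/-- The inductive step, relative to a normal form `x = t ^ a x * f (k x)` with exponents in `S` and a
finite colouring `c` of the exponents for which moving away from `0` is deterministic. -/
theorem Good.extend_of_normalForm {K G : Type*} [Group K] [Group G] (hK : Good K) (f : K →* G) (t : G)
    (a : G → ℤ) (k : G → K) (S : Set ℤ) {γ : Type} [Finite γ] (c : ℤ → γ)
    (hx : ∀ x, x = t ^ a x * f (k x)) (haS : ∀ x, a x ∈ S)
    (huniq : ∀ b ∈ S, ∀ j, a (t ^ b * f j) = b ∧ k (t ^ b * f j) = j)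
    (h0 : (0 : ℤ) ∈ S) (hc0 : ∀ b ∈ S, c b = c 0 → b = 0)
    (hpos : ∀ b ∈ S, 0 < b → b - 1 ∈ S ∧ ∀ d ∈ S, c d = c (b - 1) → d + 1 ∈ S ∧ c (d + 1) = c b)
    (hneg : ∀ b ∈ S, b < 0 → b + 1 ∈ S ∧ ∀ d ∈ S, c d = c (b + 1) → d - 1 ∈ S ∧ c (d - 1) = c b) :
    Good G := by
  obtain ⟨ι, α, _, _, g, ς, hgen, hone, hreach⟩ := hK
  let g' : Option ι → G := fun o => o.elim t (fun i => f (g i))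
  let ς' : G → γ × α := fun x => (c (a x), ς (k x))
  have hval : ∀ b ∈ S, ∀ j, ς' (t ^ b * f j) = (c b, ς j) := by
    intro b hb j
    simp only [ς', (huniq b hb j).1, (huniq b hb j).2]
  have hval0 : ∀ j, ς' (f j) = (c 0, ς j) := by
    intro j
    simpa using hval 0 h0 j
  have hfib : ∀ z j, ς' z = ς' (f j) → ∃ j', z = f j' ∧ ς j' = ς j := by
    intro z j h
    rw [hval0] at h
    have h1 := hc0 _ (haS z) (congrArg Prod.fst h)
    refine ⟨k z, ?_, congrArg Prod.snd h⟩
    have := hx z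
    rwa [h1, zpow_zero, one_mul] at this
  have hf : ∀ j, Reach g' ς' (f j) := by
    intro j
    induction hreach j with
    | one => rw [map_one]; exact Reach.one
    | step i x _ hd ih =>
      rw [map_mul]
      refine Reach.step (some i) (f x) ih ?_
      intro z hz
      obtain ⟨j', rfl, hj'⟩ := hfib z x hz
      change ς' (f (g i) * f j') = ς' (f (g i) * f x)
      rw [← map_mul, ← map_mul, hval0, hval0, hd _ hj']
    | back i x _ hd ih =>
      rw [map_mul] at ih
      refine Reach.back (some i) (f x) ih ?_
      intro z hz
      change ς' (f (g i) * z) = ς' (f (g i) * f x) at hz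
      rw [← map_mul] at hz
      obtain ⟨j', hj, hj'⟩ := hfib _ _ hz
      have hz' : z = f ((g i)⁻¹ * j') := by
        rw [map_mul, map_inv, ← hj, inv_mul_cancel_left]
      rw [hz', hval0, hval0, hd]
      rw [mul_inv_cancel_left, hj']
  have hall : ∀ (N : ℕ) (b : ℤ), b.natAbs = N → b ∈ S → ∀ j, Reach g' ς' (t ^ b * f j) := by
    intro N
    induction N with
    | zero =>
      intro b hb _ j
      obtain rfl : b = 0 := by omega
      simpa using hf j
    | succ N ih =>
      intro b hb hbS j
      rcases lt_or_ge 0 b with hb0 | hb0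
      · obtain ⟨hS, hd⟩ := hpos b hbS hb0
        have h1 : t ^ b * f j = g' none * (t ^ (b - 1) * f j) := by
          change _ = t * _
          rw [← mul_assoc, ← zpow_one_add]
          congr 2; ring
        rw [h1]
        refine Reach.step none _ (ih (b - 1) (by omega) hS j) ?_
        intro z hz
        rw [← h1, hval b hbS]
        rw [hval _ hS] at hz
        obtain ⟨h2, h3⟩ := hd _ (haS z) (congrArg Prod.fst hz)
        have h4 : g' none * z = t ^ (a z + 1) * f (k z) := by
          change t * z = _
          conv_lhs => rw [hx z]
          rw [← mul_assoc, ← zpow_one_add, add_comm]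
        rw [h4, hval _ h2, h3]
        exact congrArg (Prod.mk _) (congrArg Prod.snd hz)
      · obtain ⟨hS, hd⟩ := hneg b hbS (by omega)
        have h1 : g' none * (t ^ b * f j) = t ^ (b + 1) * f j := by
          change t * _ = _
          rw [← mul_assoc, ← zpow_one_add, add_comm]
        refine Reach.back none _ (h1 ▸ ih (b + 1) (by omega) hS j) ?_
        intro z hz
        rw [h1, hval _ hS] at hz
        obtain ⟨h2, h3⟩ := hd _ (haS _) (congrArg Prod.fst hz)
        have h4 : z = t ^ (a (g' none * z) - 1) * f (k (g' none * z)) := by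
          have h5 := hx (g' none * z)
          rw [sub_eq_neg_add, zpow_add, mul_assoc, ← h5]
          change z = t ^ (-1 : ℤ) * (t * z)
          simp
        rw [hval b hbS, h4, hval _ h2, h3]
        exact congrArg (Prod.mk _) (congrArg Prod.snd hz)
  refine ⟨Option ι, γ × α, inferInstance, inferInstance, g', ς', ?_, ?_, ?_⟩
  · rw [eq_top_iff]
    intro x _
    have hfm : ∀ j, f j ∈ Subgroup.closure (Set.range g') := by
      have : (⊤ : Subgroup K) ≤ (Subgroup.closure (Set.range g')).comap f := by
        rw [← hgen, Subgroup.closure_le]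
        rintro _ ⟨i, rfl⟩
        exact Subgroup.subset_closure ⟨some i, rfl⟩
      exact fun j => this (Subgroup.mem_top j)
    rw [hx x]
    exact mul_mem (zpow_mem (Subgroup.subset_closure (Set.mem_range_self none)) _) (hfm _)
  · intro x h
    rw [← map_one f] at h
    obtain ⟨j, rfl, hj⟩ := hfib x 1 h
    rw [hone j hj, map_one]
  · intro x
    rw [hx x]
    exact hall _ _ rfl (haS x) _

/-- If `t` generates `G` over an embedded copy of `K` (so that every element is `t ^ b * f j`) then
`Good` passes from `K` to `G`.  Normality of the image plays no role. -/
theorem Good.extend {K G : Type*} [Group K] [Group G] (hK : Good K) (f : K →* G)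
    (hf : Function.Injective f) (t : G) (hcov : ∀ x, ∃ (b : ℤ) (j : K), x = t ^ b * f j) :
    Good G := by
  have hdiff : ∀ (b d : ℤ) (j j' : K), t ^ b * f j = t ^ d * f j' → t ^ (b - d) ∈ f.range := by
    intro b d j j' h
    refine ⟨j' * j⁻¹, ?_⟩
    rw [map_mul, map_inv, sub_eq_neg_add, zpow_add, zpow_neg, eq_inv_mul_iff_mul_eq, ← mul_assoc, ← h,
      mul_inv_cancel_right]
  by_cases hfin : ∃ r : ℕ, 0 < r ∧ t ^ r ∈ f.range
  · classical
    -- Finite factor: the exponents are the residues below the least positive `r` with `t ^ r` in `K`.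
    obtain ⟨r, ⟨hr, j₀, hj₀⟩, hmin⟩ : ∃ r : ℕ, (0 < r ∧ t ^ r ∈ f.range) ∧
        ∀ s : ℕ, 0 < s → t ^ s ∈ f.range → r ≤ s :=
      ⟨Nat.find hfin, Nat.find_spec hfin, fun s h1 h2 => Nat.find_min' hfin ⟨h1, h2⟩⟩
    have hcov' : ∀ x, ∃ (b : ℤ) (j : K), b ∈ Set.Ico (0 : ℤ) r ∧ x = t ^ b * f j := by
      intro x
      obtain ⟨b, j, rfl⟩ := hcov x
      refine ⟨b % r, j₀ ^ (b / r) * j,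
        ⟨Int.emod_nonneg _ (by omega), Int.emod_lt_of_pos _ (by omega)⟩, ?_⟩
      rw [map_mul, map_zpow, hj₀, ← zpow_natCast, ← zpow_mul, ← mul_assoc, ← zpow_add,
        Int.emod_add_mul_ediv]
    choose a k haS hx using hcov'
    have hu : ∀ b ∈ Set.Ico (0 : ℤ) r, ∀ j, a (t ^ b * f j) = b ∧ k (t ^ b * f j) = j := by
      intro b hb j
      have h1 := hx (t ^ b * f j)
      have h2 := haS (t ^ b * f j)
      generalize a (t ^ b * f j) = d at *
      generalize k (t ^ b * f j) = j' at *
      have hbd : d = b := by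
        have h3 := hdiff _ _ _ _ h1
        have h4 := hdiff _ _ _ _ h1.symm
        obtain ⟨hb1, hb2⟩ := hb
        obtain ⟨hd1, hd2⟩ := h2
        rcases lt_trichotomy d b with h | h | h
        · have := hmin (b - d).toNat (by omega)
            (by rw [← zpow_natCast, Int.toNat_of_nonneg (by omega)]; exact h3)
          omega
        · exact h
        · have := hmin (d - b).toNat (by omega)
            (by rw [← zpow_natCast, Int.toNat_of_nonneg (by omega)]; exact h4)
          omega
      subst hbd
      exact ⟨rfl, (hf (mul_left_cancel h1)).symm⟩
    have : NeZero r := ⟨hr.ne'⟩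
    have hcast : ∀ b ∈ Set.Ico (0 : ℤ) r, ∀ d ∈ Set.Ico (0 : ℤ) r, (b : ZMod r) = d → b = d := by
      intro b hb d hd h
      rw [ZMod.intCast_eq_intCast_iff'] at h
      rwa [Int.emod_eq_of_lt hb.1 hb.2, Int.emod_eq_of_lt hd.1 hd.2] at h
    have hz : (0 : ℤ) ∈ Set.Ico (0 : ℤ) r := ⟨le_rfl, by omega⟩
    refine hK.extend_of_normalForm f t a k (Set.Ico (0 : ℤ) r) (fun b => (b : ZMod r)) hx haS hu hz
      (fun b hb h => hcast b hb 0 hz h) ?_ ?_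
    · intro b hb hb0
      have h1 : b - 1 ∈ Set.Ico (0 : ℤ) r := ⟨by omega, by have := hb.2; omega⟩
      refine ⟨h1, fun d hd h => ?_⟩
      have h2 : d + 1 = b := by have := hcast d hd _ h1 h; omega
      exact ⟨h2 ▸ hb, by rw [h2]⟩
    · intro b hb hb0
      have := hb.1
      omega
  · -- Infinite factor: the exponent is unique and its colour is its sign.
    choose a k hx using hcov
    have hzero : ∀ b : ℤ, t ^ b ∈ f.range → b = 0 := by
      intro b hb
      by_contra hb0
      apply hfin
      refine ⟨b.natAbs, by omega, ?_⟩
      rw [← zpow_natCast]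
      rcases Int.natAbs_eq b with h | h
      · rwa [← h]
      · have h1 : ((b.natAbs : ℕ) : ℤ) = -b := by omega
        rw [h1, zpow_neg]
        exact inv_mem hb
    refine hK.extend_of_normalForm f t a k Set.univ SignType.sign hx (fun _ => trivial) ?_ trivial
      ?_ ?_ ?_
    · intro b _ j
      have h1 := hx (t ^ b * f j)
      generalize a (t ^ b * f j) = d at *
      generalize k (t ^ b * f j) = j' at *
      have h2 := hzero _ (hdiff _ _ _ _ h1)
      obtain rfl : d = b := by omega
      exact ⟨rfl, (hf (mul_left_cancel h1)).symm⟩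
    · intro b _ h
      rwa [sign_zero, sign_eq_zero_iff] at h
    · intro b _ hb
      refine ⟨trivial, fun d _ h => ⟨trivial, ?_⟩⟩
      have hd : 0 ≤ d := by
        rw [← sign_nonneg_iff, h, sign_nonneg_iff]
        omega
      rw [sign_pos hb, sign_pos (by omega)]
    · intro b _ hb
      refine ⟨trivial, fun d _ h => ⟨trivial, ?_⟩⟩
      have hd : d ≤ 0 := by
        rw [← sign_nonpos_iff, h, sign_nonpos_iff]
        omega
      rw [sign_neg hb, sign_neg (by omega)]

theorem good_of_subsingleton (G : Type*) [Group G] [Subsingleton G] : Good G :=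
  ⟨Empty, Unit, inferInstance, inferInstance, Empty.elim, fun _ => (), Subsingleton.elim _ _,
    fun _ _ => Subsingleton.elim _ _, fun x => Subsingleton.elim 1 x ▸ Reach.one⟩

theorem IsPolycyclic.good {G : Type*} [Group G] (hG : IsPolycyclic G) : Good G := by
  obtain ⟨n, c, h0, hlast, hstep⟩ := hG
  have hgood : ∀ i, Good (c i) := by
    intro i
    induction i using Fin.induction with
    | zero =>
      rw [h0]
      exact good_of_subsingleton _
    | succ i ih =>
      obtain ⟨hle, hn, hcyc⟩ := hstep i
      obtain ⟨q, hq⟩ := hcyc.exists_generator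
      obtain ⟨t, rfl⟩ := QuotientGroup.mk_surjective q
      refine ih.extend (Subgroup.inclusion hle) (Subgroup.inclusion_injective hle) t fun x => ?_
      obtain ⟨b, hb⟩ := Subgroup.mem_zpowers_iff.1 (hq (x : _ ⧸ _))
      rw [← QuotientGroup.mk_zpow, QuotientGroup.eq, Subgroup.mem_subgroupOf] at hb
      refine ⟨b, ⟨_, hb⟩, ?_⟩
      ext
      simp
  have h := hgood (Fin.last n)
  refine h.extend (c (Fin.last n)).subtype (Subgroup.subtype_injective _) 1 fun x => ?_
  exact ⟨0, ⟨x, by rw [hlast]; trivial⟩, by simp⟩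

/-- every polycyclic group admits a golden system. -/
theorem hasGoldenSystem_of_isPolycyclic {G : Type u} [Group G]
    (hG : IsPolycyclic G) : HasGoldenSystem.{u, v} G := by
  exact hG.good.hasGoldenSystem
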